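/- Let G be a countably infinite discrete amenable group, X an infinite compact metrizable space, and α: G ↷ X a minimal free continuous action such that E_G(X) is compact in the weak* topology. Then for every ε > 0 and every finite family W_1, …, W_L of pairwise disjoint closed subsets of E_G(X), there exist pairwise disjoint compact subsets K_1, …, K_L of X such that μ(K_j) > 1 − ε for every j = 1, …, L and every μ ∈ W_j. -/

import Mathlib

open MeasureTheory Set Pointwise

variable (G X : Type*)

section Defs

variable [Group G] [MetricSpace X] [MeasurableSpace X] [MulAction G X]

/-- A Borel probability measure is `G`-invariant. -/
def InvariantMeasure (μ : ProbabilityMeasure X) : Prop :=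
  ∀ g : G, MeasureTheory.Measure.map (fun x => g • x) (μ : Measure X) = (μ : Measure X)

/-- `M_G(X)`: the set of `G`-invariant Borel probability measures on `X`. -/
def MG : Set (ProbabilityMeasure X) := {μ | InvariantMeasure G X μ}

/-- `E_G(X)`: the set of ergodic `G`-invariant Borel probability measures on `X`,
i.e. invariant measures giving every `G`-invariant Borel set measure `0` or `1`. -/
def EG : Set (ProbabilityMeasure X) :=
  {μ | InvariantMeasure G X μ ∧
    ∀ A : Set X, MeasurableSet A → (∀ g : G, g • A = A) → μ A = 0 ∨ μ A = 1}

/-- The action of `G` on `X` is free. -/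
def FreeAction : Prop := ∀ (g : G) (x : X), g • x = x → g = 1

/-- The action of `G` on `X` is minimal: there is no proper nonempty closed invariant subset. -/
def MinimalAction : Prop :=
  ∀ C : Set X, IsClosed C → (∀ g : G, g • C ⊆ C) → C = ∅ ∨ C = Set.univ

/-- The small boundary property. -/
def SmallBoundaryProperty : Prop :=
  ∀ (x : X) (U : Set X), IsOpen U → x ∈ U →
    ∃ V : Set X, IsOpen V ∧ x ∈ V ∧ V ⊆ U ∧ ∀ μ ∈ MG G X, μ (frontier V) = 0

/-- `S` is a `(K,δ)`-invariant finite subset of `G`. -/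
def FolnerInv (K : Finset G) (δ : ℝ) (S : Finset G) : Prop :=
  (1 - δ) * (S.card : ℝ) ≤ ({s | s ∈ S ∧ ∀ k ∈ K, k * s ∈ S} : Set G).ncard

/-- `G` is amenable: it admits `(K,δ)`-invariant nonempty finite subsets for all `K, δ`. -/
def AmenableGroup : Prop :=
  ∀ (K : Finset G) (δ : ℝ), 0 < δ → ∃ S : Finset G, S.Nonempty ∧ FolnerInv G K δ S

/-- `(S, V)` is a tower: the translates `s • V`, `s ∈ S`, are pairwise disjoint. -/
def IsTower (S : Finset G) (V : Set X) : Prop :=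
  (S : Set G).Pairwise fun s t => Disjoint (s • V) (t • V)

/-- `F ≺_m O`: subordination with `m`-colored multiplicity. -/
def SubordinateM (m : ℕ) (F O : Set X) : Prop :=
  ∃ (n : ℕ) (U : Fin n → Set X) (s : Fin n → G) (c : Fin n → Fin (m + 1)),
    (∀ k, IsOpen (U k)) ∧ F ⊆ ⋃ k, U k ∧ (∀ k, s k • U k ⊆ O) ∧
    ∀ k l, k ≠ l → c k = c l → Disjoint (s k • U k) (s l • U l)

/-- The action has dynamical `m`-comparison. -/
def HasMComparison (m : ℕ) : Prop :=
  ∀ F O : Set X, IsClosed F → IsOpen O →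
    (∀ μ ∈ MG G X, μ F < μ O) → SubordinateM G X m F O

/-- The action is `m`-almost finite. -/
def MAlmostFinite (m : ℕ) : Prop :=
  ∀ (n : ℕ), 1 ≤ n → ∀ (K : Finset G) (δ : ℝ), 0 < δ →
    ∃ (I : ℕ) (S : Fin I → Finset G) (V : Fin I → Set X) (c : Fin I → Fin (m + 1))
      (S' : Fin I → Finset G),
      (∀ i, IsOpen (V i)) ∧
      (∀ i, IsTower G X (S i) (closure (V i))) ∧
      (∀ i, FolnerInv G K δ (S i)) ∧
      (∀ i, ∀ s ∈ S i, Metric.diam (s • closure (V i)) < δ) ∧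
      (∀ i j, i ≠ j → c i = c j →
        Disjoint ((S i : Set G) • closure (V i)) ((S j : Set G) • closure (V j))) ∧
      (∀ i, S' i ⊆ S i) ∧ (∀ i, ((S' i).card : ℝ) ≤ (S i).card / n) ∧
      SubordinateM G X 0 (Set.univ \ ⋃ i, (S i : Set G) • V i) (⋃ i, (S' i : Set G) • V i)

end Defs

/-!
Fix a probability `p` of full support on `G`. On `L²(μ)`, the random-walk operator `T = ∑ p_g U_g`
has only `G`-invariant fixed vectors, by strict convexity, so for ergodic `μ` the mean ergodic
theorem makes the Birkhoff averages of a continuous function `f` under `T` converge to `∫ f dμ`.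
Since `A_{2n} = ½ (1 + Tⁿ) A_n`, the errors decrease along `n = 2ᵐ`; they depend continuously on
`μ`, so by Dini's theorem the convergence is uniform over a compact `E_G(X)`.

Thus `μ ↦ ∫ f dμ` is approximated in mean square by a single continuous function on `X`,
simultaneously for all ergodic `μ`. The functions on `E_G(X)` with this property form a uniformly
closed algebra, and evaluations separate measures, so by Stone–Weierstrass every continuous function
on `E_G(X)` has it. Apply this to a function equal to `j` on `W_j`, let `f` be the resulting map
on `X`, and put `K_j = {|f - j| ≤ 1/3}`; Chebyshev's inequality bounds `μ(K_j)` from below.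
-/

open Filter Topology

section WeightedAverage

theorem exists_pos_hasSum_one (ι : Type*) [Countable ι] [Nonempty ι] :
    ∃ p : ι → ℝ, (∀ i, 0 < p i) ∧ HasSum p 1 := by
  let _ := Encodable.ofCountable ι
  obtain ⟨q, hq, c, hqc, -⟩ := posSumOfEncodable zero_lt_one ι
  have hc : 0 < c := by
    obtain ⟨i⟩ := ‹Nonempty ι›
    exact (hq i).trans_le (le_hasSum hqc i fun j _ => (hq j).le)
  exact ⟨fun i => q i / c, fun i => div_pos (hq i) hc, div_self hc.ne' ▸ hqc.div_const c⟩

variable {ι E F : Type*} [NormedAddCommGroup E] [NormedSpace ℝ E]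
  [NormedAddCommGroup F] [NormedSpace ℝ F]

/-- The weighted average `∑ pᵢ Uᵢ` of a family of operators, the series being taken in operator
norm (and `0` if it diverges): the Markov operator of the random walk with steps `Uᵢ` taken with
probabilities `pᵢ`. -/
noncomputable def weightedAverage (p : ι → ℝ) (U : ι → E →L[ℝ] E) : E →L[ℝ] E :=
  ∑' i, p i • U i

variable {p : ι → ℝ} {U : ι → E →L[ℝ] E}

theorem norm_smul_le_of_norm_le_one (hp : ∀ i, 0 ≤ p i) (hU : ∀ i, ‖U i‖ ≤ 1) (i : ι) :
    ‖p i • U i‖ ≤ p i := by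
  rw [norm_smul, Real.norm_of_nonneg (hp i)]
  exact mul_le_of_le_one_right (hp i) (hU i)

theorem norm_weightedAverage_le_one (hp : ∀ i, 0 ≤ p i) (hp1 : HasSum p 1)
    (hU : ∀ i, ‖U i‖ ≤ 1) : ‖weightedAverage p U‖ ≤ 1 :=
  tsum_of_norm_bounded hp1 (norm_smul_le_of_norm_le_one hp hU)

theorem hasSum_weightedAverage_apply [CompleteSpace E] (hp : ∀ i, 0 ≤ p i) (hp1 : Summable p)
    (hU : ∀ i, ‖U i‖ ≤ 1) (x : E) : HasSum (fun i => p i • U i x) (weightedAverage p U x) := by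
  have h : HasSum (fun i => p i • U i) (weightedAverage p U) :=
    (Summable.of_norm_bounded hp1 (norm_smul_le_of_norm_le_one hp hU)).hasSum
  simpa using (ContinuousLinearMap.apply ℝ E x).hasSum h

theorem map_weightedAverage [CompleteSpace E] [CompleteSpace F] {V : ι → F →L[ℝ] F}
    (hp : ∀ i, 0 ≤ p i) (hp1 : Summable p) (hU : ∀ i, ‖U i‖ ≤ 1) (hV : ∀ i, ‖V i‖ ≤ 1)
    (Λ : E →L[ℝ] F) (hΛ : ∀ i x, Λ (U i x) = V i (Λ x)) (x : E) :
    Λ (weightedAverage p U x) = weightedAverage p V (Λ x) := by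
  have h := Λ.hasSum (hasSum_weightedAverage_apply hp hp1 hU x)
  simp only [map_smul, hΛ] at h
  exact h.unique (hasSum_weightedAverage_apply hp hp1 hV (Λ x))

theorem weightedAverage_apply_eq_self [CompleteSpace E] (hp : ∀ i, 0 ≤ p i) (hp1 : HasSum p 1)
    (hU : ∀ i, ‖U i‖ ≤ 1) {x : E} (hx : ∀ i, U i x = x) : weightedAverage p U x = x := by
  have h := hasSum_weightedAverage_apply hp hp1.summable hU x
  simp only [hx] at h
  simpa using h.unique (hp1.smul_const x)

end WeightedAverage

section Birkhoff

variable {E F : Type*} [NormedAddCommGroup E] [NormedSpace ℝ E]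
  [NormedAddCommGroup F] [NormedSpace ℝ F]

/-- The Birkhoff average `n⁻¹ (1 + T + ⋯ + Tⁿ⁻¹)` as an operator; it is `0` for `n = 0`. -/
noncomputable def birkhoffOperator (T : E →L[ℝ] E) (n : ℕ) : E →L[ℝ] E :=
  (n : ℝ)⁻¹ • ∑ k ∈ Finset.range n, T ^ k

theorem birkhoffOperator_apply (T : E →L[ℝ] E) (n : ℕ) (x : E) :
    birkhoffOperator T n x = birkhoffAverage ℝ T id n x := by
  simp [birkhoffOperator, birkhoffAverage, birkhoffSum]

theorem birkhoffOperator_apply_eq_self {T : E →L[ℝ] E} {x : E} (hx : T x = x) {n : ℕ}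
    (hn : n ≠ 0) : birkhoffOperator T n x = x := by
  rw [birkhoffOperator_apply]
  exact Function.IsFixedPt.birkhoffAverage_eq ℝ hx _ (by simpa using hn)

theorem map_birkhoffOperator {T : E →L[ℝ] E} {S : F →L[ℝ] F} (Λ : E →L[ℝ] F)
    (hΛ : ∀ x, Λ (T x) = S (Λ x)) (n : ℕ) (x : E) :
    Λ (birkhoffOperator T n x) = birkhoffOperator S n (Λ x) := by
  have hiter (k : ℕ) : Λ (T^[k] x) = S^[k] (Λ x) := Function.Semiconj.iterate_right hΛ k x
  simp [birkhoffOperator, hiter]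

theorem norm_birkhoffOperator_two_mul_le {T : E →L[ℝ] E} (hT : ‖T‖ ≤ 1) (n : ℕ) (x : E) :
    ‖birkhoffOperator T (2 * n) x‖ ≤ ‖birkhoffOperator T n x‖ := by
  have hsplit : birkhoffOperator T (2 * n) x =
      (2 : ℝ)⁻¹ • (birkhoffOperator T n x + (T ^ n) (birkhoffOperator T n x)) := by
    simp [birkhoffOperator, two_mul, Finset.sum_range_add, pow_add, ← Finset.mul_sum, smul_smul,
      ← mul_inv]
  have hpow : ‖(T ^ n) (birkhoffOperator T n x)‖ ≤ ‖birkhoffOperator T n x‖ := by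
    have hlip : LipschitzWith 1 T := T.lipschitz.weaken hT
    simpa using (hlip.iterate n).norm_le_mul (by simp) (birkhoffOperator T n x)
  calc ‖birkhoffOperator T (2 * n) x‖
      = 2⁻¹ * ‖birkhoffOperator T n x + (T ^ n) (birkhoffOperator T n x)‖ := by
        rw [hsplit, norm_smul, norm_inv, Real.norm_two]
    _ ≤ 2⁻¹ * (‖birkhoffOperator T n x‖ + ‖birkhoffOperator T n x‖) := by
        gcongr
        exact (norm_add_le _ _).trans (by gcongr)
    _ = ‖birkhoffOperator T n x‖ := by ring

theorem antitone_norm_birkhoffOperator_two_pow {T : E →L[ℝ] E} (hT : ‖T‖ ≤ 1) (x : E) :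
    Antitone fun m : ℕ => ‖birkhoffOperator T (2 ^ m) x‖ :=
  antitone_nat_of_succ_le fun m => by
    rw [pow_succ']
    exact norm_birkhoffOperator_two_mul_le hT _ x

end Birkhoff

section Hilbert

variable {ι H : Type*} [NormedAddCommGroup H] [InnerProductSpace ℝ H] [CompleteSpace H]
  {p : ι → ℝ} {U : ι → H →L[ℝ] H}

open scoped RealInnerProductSpace

theorem forall_apply_eq_self_of_weightedAverage_apply_eq_self (hp : ∀ i, 0 < p i)
    (hp1 : HasSum p 1) (hU : ∀ i, ‖U i‖ ≤ 1) {x : H} (hx : weightedAverage p U x = x) (i : ι) :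
    U i x = x := by
  have hle : ∀ j, ‖U j x‖ ≤ ‖x‖ := fun j => by simpa using (U j).le_of_opNorm_le (hU j) x
  have hinner : ∀ j, ⟪x, U j x⟫ ≤ ‖x‖ ^ 2 := fun j =>
    calc ⟪x, U j x⟫ ≤ ‖x‖ * ‖U j x‖ := real_inner_le_norm x (U j x)
      _ ≤ ‖x‖ * ‖x‖ := by gcongr; exact hle j
      _ = ‖x‖ ^ 2 := (sq _).symm
  have hsum : HasSum (fun j => p j * (‖x‖ ^ 2 - ⟪x, U j x⟫)) 0 := by
    have h : HasSum (fun j => p j * ⟪x, U j x⟫) (‖x‖ ^ 2) := by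
      have h' := (innerSL ℝ x).hasSum
        (hasSum_weightedAverage_apply (fun j => (hp j).le) hp1.summable hU x)
      simpa only [hx, innerSL_apply_apply, inner_smul_right, real_inner_self_eq_norm_sq] using h'
    rw [← sub_self (1 * ‖x‖ ^ 2)]
    simpa only [mul_sub, one_mul] using (hp1.mul_right (‖x‖ ^ 2)).sub h
  have hzero := congr_fun ((hasSum_zero_iff_of_nonneg fun j =>
    mul_nonneg (hp j).le (sub_nonneg.2 (hinner j))).1 hsum) i
  have heq : ⟪x, U i x⟫ = ‖x‖ ^ 2 :=
    (sub_eq_zero.1 ((mul_eq_zero.1 hzero).resolve_left (hp i).ne')).symm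
  refine eq_of_norm_le_re_inner_eq_norm_sq (𝕜 := ℝ) (hle i) ?_
  simpa [real_inner_comm] using heq

theorem tendsto_birkhoffOperator_weightedAverage_zero (hp : ∀ i, 0 < p i) (hp1 : HasSum p 1)
    (hU : ∀ i, ‖U i‖ ≤ 1) {x : H} (hx : ∀ v, (∀ i, U i v = v) → ⟪v, x⟫ = 0) :
    Tendsto (fun n => birkhoffOperator (weightedAverage p U) n x) atTop (𝓝 0) := by
  have hlim := (weightedAverage p U).tendsto_birkhoffAverage_orthogonalProjection
    (norm_weightedAverage_le_one (fun i => (hp i).le) hp1 hU) x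
  simp only [birkhoffOperator_apply]
  have hmem : x ∈ ((weightedAverage p U).eqLocus (1 : H →L[ℝ] H))ᗮ :=
    (Submodule.mem_orthogonal _ _).2 fun v hv =>
      hx v (forall_apply_eq_self_of_weightedAverage_apply_eq_self hp hp1 hU hv)
  rwa [Submodule.orthogonalProjectionOnto_eq_zero_iff.2 hmem] at hlim

end Hilbert

section Koopman

variable {G X : Type*} [SMul G X] [MeasurableSpace X] [MeasurableConstSMul G X]

/-- The Koopman operator `v ↦ v ∘ g` on `L²(μ)`, for the action of `g` on `X`. -/
noncomputable def koopman (μ : Measure X) [SMulInvariantMeasure G X μ] (g : G) :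
    Lp ℝ 2 μ →L[ℝ] Lp ℝ 2 μ :=
  (Lp.compMeasurePreservingₗᵢ ℝ (g • ·) (measurePreserving_smul g μ)).toContinuousLinearMap

theorem norm_koopman_le_one (μ : Measure X) [SMulInvariantMeasure G X μ] (g : G) :
    ‖koopman μ g‖ ≤ 1 :=
  LinearIsometry.norm_toContinuousLinearMap_le _

theorem coeFn_koopman {μ : Measure X} [SMulInvariantMeasure G X μ] (g : G) (v : Lp ℝ 2 μ) :
    koopman μ g v =ᵐ[μ] v ∘ (g • ·) :=
  Lp.coeFn_compMeasurePreserving v (measurePreserving_smul g μ)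

end Koopman

section Ergodic

variable {G X : Type*} [Group G] [MeasurableSpace X] [MulAction G X]

theorem ergodicSMul_of_mem_EG [Countable G] [MeasurableConstSMul G X] {μ : ProbabilityMeasure X}
    (hμ : μ ∈ EG G X) : ErgodicSMul G X (μ : Measure X) := by
  have : SMulInvariantMeasure G X (μ : Measure X) :=
    (smulInvariantMeasure_tfae G (μ : Measure X)).out 5 0 |>.1 hμ.1
  refine ⟨fun {s} hs hinv => ?_⟩
  -- `EG` only tests strictly invariant sets: replace `s` by the points whose orbit stays in `s`.
  set A : Set X := ⋂ g : G, (g • ·) ⁻¹' s with hA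
  have hAs : A =ᵐ[(μ : Measure X)] s := by
    simpa [hA, iInter_const] using Filter.EventuallyEq.countable_iInter hinv
  have hAmeas : MeasurableSet A := .iInter fun g => measurable_const_smul g hs
  have hAinv (g : G) : g • A = A := by
    ext x
    simp only [hA, mem_smul_set_iff_inv_smul_mem, mem_iInter, mem_preimage, smul_smul]
    exact (Equiv.mulRight g⁻¹).forall_congr_left.trans (by simp)
  refine EventuallyConst.congr ?_ hAs
  rw [eventuallyConst_set']
  rcases hμ.2 A hAmeas hAinv with h | h
  · exact .inl (ae_eq_empty.2 ((μ.null_iff_toMeasure_null A).1 h))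
  · refine .inr (ae_eq_univ.2 ((prob_compl_eq_zero_iff hAmeas).2 ?_))
    rw [← ProbabilityMeasure.ennreal_coeFn_eq_coeFn_toMeasure, h, ENNReal.coe_one]

theorem ae_eq_const_of_forall_comp_smul_ae_eq {β : Type*} [Nonempty β] [MeasurableSpace β]
    [MeasurableSpace.CountablySeparated β] {μ : Measure X} [ErgodicSMul G X μ] {v : X → β}
    (hv : NullMeasurable v μ) (hinv : ∀ g : G, v ∘ (g • ·) =ᵐ[μ] v) :
    ∃ c, v =ᵐ[μ] Function.const X c :=
  exists_eventuallyEq_const_of_forall_separating MeasurableSet fun U hU =>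
    eventuallyConst_set.1 <| aeconst_of_forall_preimage_smul_ae_eq G (hv hU) fun g =>
      (hinv g).preimage U

theorem ae_eq_const_of_forall_koopman_apply_eq_self [MeasurableConstSMul G X] {μ : Measure X}
    [ErgodicSMul G X μ] {v : Lp ℝ 2 μ} (hv : ∀ g : G, koopman μ g v = v) :
    ∃ c, v =ᵐ[μ] Function.const X c :=
  ae_eq_const_of_forall_comp_smul_ae_eq (Lp.aestronglyMeasurable v).aemeasurable.nullMeasurable
    fun g : G => by simpa only [hv g] using (coeFn_koopman g v).symm

end Ergodic

section Translation

variable {G X : Type*} [SMul G X] [TopologicalSpace X] [ContinuousConstSMul G X]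

variable (X) in
/-- The translation operator `f ↦ f ∘ g` on `C(X, ℝ)`. -/
noncomputable def translation (g : G) : C(X, ℝ) →L[ℝ] C(X, ℝ) :=
  ContinuousMap.compCLM ℝ ℝ ⟨(g • ·), continuous_const_smul g⟩

theorem norm_translation_le_one [CompactSpace X] (g : G) : ‖translation X g‖ ≤ 1 :=
  ContinuousLinearMap.opNorm_le_bound _ zero_le_one fun f => by
    rw [one_mul]
    exact (ContinuousMap.norm_le _ (norm_nonneg f)).2 fun x => f.norm_coe_le_norm (g • x)

end Translation

section ContinuousFunctions

variable {G X : Type*} [TopologicalSpace X] [CompactSpace X] [MeasurableSpace X] [BorelSpace X]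

theorem integrable_of_continuous {f : X → ℝ} (hf : Continuous f) (μ : Measure X)
    [IsFiniteMeasure μ] : Integrable f μ :=
  hf.integrable_of_hasCompactSupport (.of_compactSpace f)

theorem continuous_integral (f : C(X, ℝ)) :
    Continuous fun μ : ProbabilityMeasure X => ∫ x, f x ∂(μ : Measure X) :=
  ProbabilityMeasure.continuous_iff_forall_continuousMap_continuous_integral.1 continuous_id f

theorem continuous_integral_sq_sub_integral (k f : C(X, ℝ)) :
    Continuous fun μ : ProbabilityMeasure X =>
      ∫ x, (k x - ∫ y, f y ∂(μ : Measure X)) ^ 2 ∂(μ : Measure X) := by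
  have hexpand (μ : ProbabilityMeasure X) :
      ∫ x, (k x - ∫ y, f y ∂(μ : Measure X)) ^ 2 ∂(μ : Measure X) =
        ∫ x, (k ^ 2) x ∂(μ : Measure X) -
          2 * (∫ x, f x ∂(μ : Measure X)) * ∫ x, k x ∂(μ : Measure X) +
            (∫ x, f x ∂(μ : Measure X)) ^ 2 := by
    set c := ∫ x, f x ∂(μ : Measure X)
    have hsq (x : X) : (k x - c) ^ 2 = (k ^ 2) x - 2 * c * k x + c ^ 2 := by
      rw [ContinuousMap.pow_apply]
      ring
    have hkc : Integrable (fun x => 2 * c * k x) (μ : Measure X) :=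
      (integrable_of_continuous k.continuous _).const_mul _
    have hsub : Integrable (fun x => (k ^ 2) x - 2 * c * k x) (μ : Measure X) :=
      (integrable_of_continuous (k ^ 2).continuous _).sub hkc
    simp only [hsq]
    rw [integral_add hsub (integrable_const _),
      integral_sub (integrable_of_continuous (k ^ 2).continuous _) hkc, integral_const_mul]
    simp
  simp only [hexpand]
  have hf := continuous_integral f
  have hk := continuous_integral k
  have hk2 := continuous_integral (k ^ 2)
  fun_prop

theorem norm_sq_toLp_two (μ : Measure X) [IsFiniteMeasure μ] (f : C(X, ℝ)) :
    ‖ContinuousMap.toLp 2 μ ℝ f‖ ^ 2 = ∫ x, f x ^ 2 ∂μ := by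
  rw [← real_inner_self_eq_norm_sq, ContinuousMap.inner_toLp]
  simp [sq]

variable [SMul G X] [ContinuousConstSMul G X]

theorem toLp_translation (μ : Measure X) [IsFiniteMeasure μ] [SMulInvariantMeasure G X μ] (g : G)
    (f : C(X, ℝ)) :
    ContinuousMap.toLp 2 μ ℝ (translation X g f) = koopman μ g (ContinuousMap.toLp 2 μ ℝ f) := by
  refine Lp.ext ?_
  have hf := (measurePreserving_smul g μ).quasiMeasurePreserving.ae
    (ContinuousMap.coeFn_toLp (p := 2) (𝕜 := ℝ) μ f)
  filter_upwards [hf, coeFn_koopman g (ContinuousMap.toLp 2 μ ℝ f),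
    ContinuousMap.coeFn_toLp (p := 2) (𝕜 := ℝ) μ (translation X g f)] with x hfx hkx htx
  rw [htx, hkx]
  exact hfx.symm

variable {p : G → ℝ}

theorem toLp_weightedAverage_translation (hp : ∀ g, 0 ≤ p g) (hp1 : Summable p) (μ : Measure X)
    [IsFiniteMeasure μ] [SMulInvariantMeasure G X μ] (f : C(X, ℝ)) :
    ContinuousMap.toLp 2 μ ℝ (weightedAverage p (translation X) f) =
      weightedAverage p (koopman μ) (ContinuousMap.toLp 2 μ ℝ f) :=
  map_weightedAverage (U := translation X) (V := koopman μ) hp hp1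
    norm_translation_le_one (norm_koopman_le_one μ) (ContinuousMap.toLp 2 μ ℝ)
    (fun g f => toLp_translation μ g f) f

theorem integral_sq_birkhoffOperator_sub_const (hp : ∀ g, 0 ≤ p g) (hp1 : HasSum p 1)
    (μ : Measure X) [IsFiniteMeasure μ] [SMulInvariantMeasure G X μ] (f : C(X, ℝ)) (c : ℝ)
    {n : ℕ} (hn : n ≠ 0) :
    ∫ x, (birkhoffOperator (weightedAverage p (translation X)) n f x - c) ^ 2 ∂μ =
      ‖birkhoffOperator (weightedAverage p (koopman μ)) n
        (ContinuousMap.toLp 2 μ ℝ (f - .const X c))‖ ^ 2 := by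
  have hconst : weightedAverage p (translation X) (.const X c) = .const X c :=
    weightedAverage_apply_eq_self (U := translation X) hp hp1
      (fun g => norm_translation_le_one g) fun _ => rfl
  have hmap := map_birkhoffOperator (T := weightedAverage p (translation X))
    (S := weightedAverage p (koopman μ)) (ContinuousMap.toLp 2 μ ℝ)
    (fun u => toLp_weightedAverage_translation hp hp1.summable μ u) n (f - .const X c)
  rw [← hmap, map_sub, birkhoffOperator_apply_eq_self hconst hn, norm_sq_toLp_two]
  rfl

end ContinuousFunctions

section MeanErgodic

variable {G X : Type*} [Group G] [TopologicalSpace X] [CompactSpace X] [MeasurableSpace X]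
  [BorelSpace X] [MulAction G X] [ContinuousConstSMul G X]

open scoped RealInnerProductSpace in
theorem inner_toLp_eq_zero_of_forall_koopman_apply_eq_self {μ : Measure X} [IsFiniteMeasure μ]
    [ErgodicSMul G X μ] {f : C(X, ℝ)} (hf : ∫ x, f x ∂μ = 0) {v : Lp ℝ 2 μ}
    (hv : ∀ g : G, koopman μ g v = v) : ⟪v, ContinuousMap.toLp 2 μ ℝ f⟫ = 0 := by
  obtain ⟨c, hc⟩ := ae_eq_const_of_forall_koopman_apply_eq_self hv
  calc ⟪v, ContinuousMap.toLp 2 μ ℝ f⟫ = ∫ x, f x * c ∂μ := by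
        rw [L2.inner_def]
        refine integral_congr_ae ?_
        filter_upwards [hc, ContinuousMap.coeFn_toLp (p := 2) (𝕜 := ℝ) μ f] with x hcx hfx
        rw [hcx, hfx]
        rfl
    _ = 0 := by rw [integral_mul_const, hf, zero_mul]

theorem tendsto_birkhoffOperator_koopman {p : G → ℝ} (hp : ∀ g, 0 < p g) (hp1 : HasSum p 1)
    (μ : Measure X) [IsProbabilityMeasure μ] [ErgodicSMul G X μ] (f : C(X, ℝ)) :
    Tendsto (fun n => birkhoffOperator (weightedAverage p (koopman μ)) n
        (ContinuousMap.toLp 2 μ ℝ (f - .const X (∫ x, f x ∂μ)))) atTop (𝓝 0) := by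
  refine tendsto_birkhoffOperator_weightedAverage_zero hp hp1 (norm_koopman_le_one μ)
    fun v => inner_toLp_eq_zero_of_forall_koopman_apply_eq_self ?_
  simp [integral_sub (integrable_of_continuous f.continuous μ)]

end MeanErgodic

section MeanSquare

variable {X : Type*} [MeasurableSpace X]

theorem integral_add_sq_le {μ : Measure X} {u v : X → ℝ} (hu : Integrable (fun x => u x ^ 2) μ)
    (hv : Integrable (fun x => v x ^ 2) μ) :
    ∫ x, (u x + v x) ^ 2 ∂μ ≤ 2 * (∫ x, u x ^ 2 ∂μ + ∫ x, v x ^ 2 ∂μ) := by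
  rw [← integral_add hu hv, ← integral_const_mul]
  exact integral_mono_of_nonneg (ae_of_all _ fun x => sq_nonneg _) ((hu.add hv).const_mul 2)
    (ae_of_all _ fun x => add_sq_le)

theorem integral_mul_sq_le {μ : Measure X} {u v : X → ℝ} {C : ℝ} (hu : ∀ x, ‖u x‖ ≤ C)
    (hv : Integrable (fun x => v x ^ 2) μ) :
    ∫ x, (u x * v x) ^ 2 ∂μ ≤ C ^ 2 * ∫ x, v x ^ 2 ∂μ := by
  rw [← integral_const_mul]
  refine integral_mono_of_nonneg (ae_of_all _ fun x => sq_nonneg _) (hv.const_mul _)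
    (ae_of_all _ fun x => ?_)
  simp only [mul_pow, ← sq_abs (u x)]
  gcongr
  exact hu x

theorem one_sub_lt_measureReal_preimage_closedBall {μ : Measure X} [IsProbabilityMeasure μ]
    {f : X → ℝ} (hf : Measurable f) {c r ε : ℝ} (hr : 0 < r)
    (hint : Integrable (fun x => (f x - c) ^ 2) μ) (h : ∫ x, (f x - c) ^ 2 ∂μ < r ^ 2 * ε) :
    1 - ε < μ.real (f ⁻¹' Metric.closedBall c r) := by
  have hcompl : (f ⁻¹' Metric.closedBall c r)ᶜ ⊆ {x | r ^ 2 ≤ (f x - c) ^ 2} := by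
    intro x hx
    have hx' : r < |f x - c| := by simpa [Real.dist_eq] using hx
    exact sq_le_sq.2 ((abs_of_pos hr).trans_le hx'.le)
  have hmarkov := mul_meas_ge_le_integral_of_nonneg (ae_of_all _ fun x => sq_nonneg (f x - c))
    hint (r ^ 2)
  have hlt : μ.real {x | r ^ 2 ≤ (f x - c) ^ 2} < ε :=
    lt_of_mul_lt_mul_left (hmarkov.trans_lt h) (sq_nonneg r)
  have hle := measureReal_mono (μ := μ) hcompl
  rw [probReal_compl_eq_one_sub (hf Metric.isClosed_closedBall.measurableSet)] at hle
  linarith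

variable [TopologicalSpace X]

/-- A function `h` on a set `E` of probability measures is mean-square approximable if, for
every `δ > 0`, a single continuous function `f` on `X` is within `δ` of the constant `h μ`, in mean
square with respect to `μ`, for all `μ ∈ E` at once. -/
def MeanSquareApproximable (E : Set (ProbabilityMeasure X)) (h : E → ℝ) : Prop :=
  ∀ δ > 0, ∃ f : C(X, ℝ), ∀ μ : E, ∫ x, (f x - h μ) ^ 2 ∂(μ : Measure X) < δ

namespace MeanSquareApproximable

variable {E : Set (ProbabilityMeasure X)} {h k : E → ℝ}

theorem const (E : Set (ProbabilityMeasure X)) (c : ℝ) :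
    MeanSquareApproximable E fun _ => c :=
  fun δ hδ => ⟨.const X c, fun μ => by simpa using hδ⟩

variable [CompactSpace X] [BorelSpace X]

theorem add (hh : MeanSquareApproximable E h) (hk : MeanSquareApproximable E k) :
    MeanSquareApproximable E (h + k) := by
  intro δ hδ
  obtain ⟨f, hf⟩ := hh (δ / 4) (by positivity)
  obtain ⟨g, hg⟩ := hk (δ / 4) (by positivity)
  refine ⟨f + g, fun μ => ?_⟩
  calc ∫ x, ((f + g) x - (h + k) μ) ^ 2 ∂(μ : Measure X)
      = ∫ x, ((f x - h μ) + (g x - k μ)) ^ 2 ∂(μ : Measure X) := by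
        simp only [ContinuousMap.add_apply, Pi.add_apply, add_sub_add_comm]
    _ ≤ 2 * (∫ x, (f x - h μ) ^ 2 ∂(μ : Measure X) + ∫ x, (g x - k μ) ^ 2 ∂(μ : Measure X)) :=
        integral_add_sq_le (integrable_of_continuous (by fun_prop) _)
          (integrable_of_continuous (by fun_prop) _)
    _ < δ := by linarith [hf μ, hg μ]

theorem mul (hh : MeanSquareApproximable E h) (hk : MeanSquareApproximable E k) {C : ℝ}
    (hC : ∀ μ, ‖k μ‖ ≤ C) : MeanSquareApproximable E (h * k) := by
  intro δ hδ
  obtain ⟨f, hf⟩ := hh (δ / (4 * (C ^ 2 + 1))) (by positivity)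
  obtain ⟨g, hg⟩ := hk (δ / (4 * (‖f‖ ^ 2 + 1))) (by positivity)
  have hscale {s a : ℝ} (ha : 0 ≤ a) (hlt : a < δ / (4 * (s ^ 2 + 1))) : s ^ 2 * a < δ / 4 := by
    rw [lt_div_iff₀ (by positivity)] at hlt
    linarith
  refine ⟨f * g, fun μ => ?_⟩
  have hf2 : Integrable (fun x => (f x - h μ) ^ 2) (μ : Measure X) :=
    integrable_of_continuous (by fun_prop) _
  have hg2 : Integrable (fun x => (g x - k μ) ^ 2) (μ : Measure X) :=
    integrable_of_continuous (by fun_prop) _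
  calc ∫ x, ((f * g) x - (h * k) μ) ^ 2 ∂(μ : Measure X)
      = ∫ x, (f x * (g x - k μ) + k μ * (f x - h μ)) ^ 2 ∂(μ : Measure X) := by
        congr 1 with x
        simp only [ContinuousMap.mul_apply, Pi.mul_apply]
        ring
    _ ≤ 2 * (∫ x, (f x * (g x - k μ)) ^ 2 ∂(μ : Measure X) +
          ∫ x, (k μ * (f x - h μ)) ^ 2 ∂(μ : Measure X)) :=
        integral_add_sq_le (integrable_of_continuous (by fun_prop) _)
          (integrable_of_continuous (by fun_prop) _)
    _ ≤ 2 * (‖f‖ ^ 2 * ∫ x, (g x - k μ) ^ 2 ∂(μ : Measure X) +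
          C ^ 2 * ∫ x, (f x - h μ) ^ 2 ∂(μ : Measure X)) := by
        gcongr
        · exact integral_mul_sq_le f.norm_coe_le_norm hg2
        · exact integral_mul_sq_le (fun _ => hC μ) hf2
    _ < δ := by
        linarith [hscale (integral_nonneg fun x => sq_nonneg (g x - k μ)) (hg μ),
          hscale (integral_nonneg fun x => sq_nonneg (f x - h μ)) (hf μ)]

theorem of_forall_exists_norm_sub_lt
    (hh : ∀ η > 0, ∃ k, MeanSquareApproximable E k ∧ ∀ μ, ‖k μ - h μ‖ < η) :
    MeanSquareApproximable E h := by
  intro δ hδ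
  obtain ⟨k, hk, hkh⟩ := hh √(δ / 4) (by positivity)
  obtain ⟨f, hf⟩ := hk (δ / 4) (by positivity)
  refine ⟨f, fun μ => ?_⟩
  calc ∫ x, (f x - h μ) ^ 2 ∂(μ : Measure X)
      = ∫ x, ((f x - k μ) + (k μ - h μ)) ^ 2 ∂(μ : Measure X) := by
        simp only [sub_add_sub_cancel]
    _ ≤ 2 * (∫ x, (f x - k μ) ^ 2 ∂(μ : Measure X) + ∫ _, (k μ - h μ) ^ 2 ∂(μ : Measure X)) :=
        integral_add_sq_le (integrable_of_continuous (by fun_prop) _) (integrable_const _)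
    _ = 2 * (∫ x, (f x - k μ) ^ 2 ∂(μ : Measure X) + (k μ - h μ) ^ 2) := by simp
    _ < δ := by
        have hsq : (k μ - h μ) ^ 2 < δ / 4 := by
          rw [← sq_abs]
          exact (Real.lt_sqrt (abs_nonneg _)).1 (hkh μ)
        linarith [hf μ]

variable (E) in
/-- The mean-square approximable continuous functions on a compact set `E` of probability measures,
as a subalgebra of `C(E, ℝ)`. -/
def subalgebra [CompactSpace E] : Subalgebra ℝ C(E, ℝ) where
  carrier := {h | MeanSquareApproximable E h}
  add_mem' hh hk := hh.add hk
  mul_mem' {_ k} hh hk := hh.mul hk k.norm_coe_le_norm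
  algebraMap_mem' c := const E c

theorem of_continuousMap [HasOuterApproxClosed X] [CompactSpace E]
    (heval : ∀ f : C(X, ℝ), MeanSquareApproximable E fun μ => ∫ x, f x ∂(μ : Measure X))
    (h : C(E, ℝ)) : MeanSquareApproximable E h := by
  let eval (f : C(X, ℝ)) : C(E, ℝ) :=
    ⟨fun μ => ∫ x, f x ∂(μ : Measure X), (continuous_integral f).comp continuous_subtype_val⟩
  have hsep : (subalgebra E).SeparatesPoints := by
    intro μ ν hμν
    by_contra! hall
    refine hμν (Subtype.ext (ProbabilityMeasure.toMeasure_injective ?_))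
    refine ext_of_forall_integral_eq_of_IsFiniteMeasure fun f => ?_
    exact hall (eval f.toContinuousMap) ⟨_, heval f.toContinuousMap, rfl⟩
  refine of_forall_exists_norm_sub_lt fun η hη => ?_
  obtain ⟨k, hk⟩ :=
    ContinuousMap.exists_mem_subalgebra_near_continuousMap_of_separatesPoints _ hsep h η hη
  exact ⟨k, k.2, fun μ => ((k - h : C(E, ℝ)).norm_coe_le_norm μ).trans_lt hk⟩

end MeanSquareApproximable

end MeanSquare

section EvaluationMaps

variable {G X : Type*} [Group G] [Countable G] [TopologicalSpace X] [CompactSpace X]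
  [MeasurableSpace X] [BorelSpace X] [MulAction G X] [ContinuousConstSMul G X]

theorem meanSquareApproximable_integral (hcpt : IsCompact (EG G X)) (f : C(X, ℝ)) :
    MeanSquareApproximable (EG G X) fun μ => ∫ x, f x ∂(μ : Measure X) := by
  intro δ hδ
  obtain ⟨p, hp, hp1⟩ := exists_pos_hasSum_one G
  let k (m : ℕ) : C(X, ℝ) := birkhoffOperator (weightedAverage p (translation X)) (2 ^ m) f
  let err (m : ℕ) (μ : ProbabilityMeasure X) : ℝ :=
    ∫ x, (k m x - ∫ y, f y ∂(μ : Measure X)) ^ 2 ∂(μ : Measure X)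
  have herr (μ) (hμ : μ ∈ EG G X) : Antitone (err · μ) ∧ Tendsto (err · μ) atTop (𝓝 0) := by
    have := ergodicSMul_of_mem_EG hμ
    have herr_eq (m : ℕ) : err m μ = _ :=
      integral_sq_birkhoffOperator_sub_const (fun g => (hp g).le) hp1 (μ : Measure X) f
        (∫ y, f y ∂(μ : Measure X)) (pow_ne_zero m two_ne_zero)
    have hnorm := norm_weightedAverage_le_one (fun g => (hp g).le) hp1
      (norm_koopman_le_one (μ : Measure X))
    simp only [herr_eq]
    constructor
    · intro m n hmn
      exact pow_le_pow_left₀ (norm_nonneg _) (antitone_norm_birkhoffOperator_two_pow hnorm _ hmn) 2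
    · simpa using ((tendsto_birkhoffOperator_koopman hp hp1 (μ : Measure X) f).comp
        (tendsto_pow_atTop_atTop_of_one_lt one_lt_two)).norm.pow 2
  have hunif : TendstoUniformlyOn err 0 atTop (EG G X) :=
    Antitone.tendstoUniformlyOn_of_forall_tendsto hcpt
      (fun m => (continuous_integral_sq_sub_integral (k m) f).continuousOn)
      (fun μ hμ => (herr μ hμ).1) continuousOn_const fun μ hμ => (herr μ hμ).2
  obtain ⟨m, hm⟩ := (Metric.tendstoUniformlyOn_iff.1 hunif δ hδ).exists
  refine ⟨k m, fun μ => ?_⟩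
  have hdist := hm μ μ.2
  rw [Pi.zero_apply, dist_zero_left] at hdist
  exact (Real.le_norm_self _).trans_lt hdist

end EvaluationMaps

theorem exists_continuous_eqOn_const_of_isClosed {ι Z : Type*} [Finite ι] [TopologicalSpace Z]
    [NormalSpace Z] {W : ι → Set Z} (hclosed : ∀ i, IsClosed (W i))
    (hdisj : Pairwise (Function.onFun Disjoint W)) (c : ι → ℝ) :
    ∃ h : C(Z, ℝ), ∀ i, EqOn h (Function.const Z (c i)) (W i) := by
  have := Fintype.ofFinite ι
  have hbump (i : ι) : ∃ f : C(Z, ℝ), EqOn f 0 (⋃ j : {j // j ≠ i}, W j) ∧ EqOn f 1 (W i) := by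
    obtain ⟨f, hf0, hf1, -⟩ := exists_continuous_zero_one_of_isClosed
      (isClosed_iUnion_of_finite fun j : {j // j ≠ i} => hclosed j) (hclosed i)
      (disjoint_iUnion_left.2 fun j => hdisj j.2)
    exact ⟨f, hf0, hf1⟩
  choose f hf0 hf1 using hbump
  refine ⟨∑ i, c i • f i, fun i z hz => ?_⟩
  rw [ContinuousMap.sum_apply, Finset.sum_eq_single i]
  · simp [hf1 i hz]
  · intro j _ hji
    simp [hf0 j (mem_iUnion_of_mem ⟨i, hji.symm⟩ hz)]
  · simp

theorem exists_disjoint_compacts_for_disjoint_closed_ergodic_sets_general {G X ι : Type*} [Group G]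
    [Countable G] [TopologicalSpace X] [CompactSpace X] [HasOuterApproxClosed X]
    [MeasurableSpace X] [BorelSpace X] [MulAction G X] [ContinuousConstSMul G X] [Finite ι]
    (hcpt : IsCompact (EG G X)) {ε : ℝ} (hε : 0 < ε) {W : ι → Set (ProbabilityMeasure X)}
    (hWclosed : ∀ j, IsClosed (W j)) (hWsub : ∀ j, W j ⊆ EG G X)
    (hWdisj : Pairwise (Function.onFun Disjoint W)) :
    ∃ K : ι → Set X, (∀ j, IsCompact (K j)) ∧ Pairwise (Function.onFun Disjoint K) ∧
      ∀ j, ∀ μ ∈ W j, 1 - ε < (μ (K j) : ℝ) := by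
  have : CompactSpace (EG G X) := isCompact_iff_compactSpace.1 hcpt
  obtain ⟨n, ⟨e⟩⟩ := Finite.exists_equiv_fin ι
  obtain ⟨h, hh⟩ := exists_continuous_eqOn_const_of_isClosed
    (fun j => (hWclosed j).preimage (continuous_subtype_val (p := (· ∈ EG G X))))
    (fun _ _ hij => (hWdisj hij).preimage Subtype.val) fun j => ((e j : ℕ) : ℝ)
  obtain ⟨f, hf⟩ := MeanSquareApproximable.of_continuousMap
    (meanSquareApproximable_integral hcpt) h ((1 / 3) ^ 2 * ε) (by positivity)
  refine ⟨fun j => f ⁻¹' Metric.closedBall ((e j : ℕ) : ℝ) (1 / 3),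
    fun j => (Metric.isClosed_closedBall.preimage f.continuous).isCompact, fun i j hij => ?_,
    fun j μ hμ => ?_⟩
  · refine (Metric.closedBall_disjoint_closedBall ?_).preimage f
    have hne : (e i : ℕ) ≠ e j := Fin.val_injective.ne (e.injective.ne hij)
    have := Nat.pairwise_one_le_dist hne
    rw [Nat.dist_cast_real]
    linarith
  · have hμh : h ⟨μ, hWsub j hμ⟩ = (e j : ℕ) := hh j (x := ⟨μ, hWsub j hμ⟩) hμ
    refine one_sub_lt_measureReal_preimage_closedBall f.continuous.measurable (by norm_num)
      (integrable_of_continuous (by fun_prop) _) ?_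
    simpa only [hμh] using hf ⟨μ, hWsub j hμ⟩

/-- If `E_G(X)` is compact, then for every `ε > 0` and finite family of pairwise
disjoint closed subsets `W_1, …, W_L` of `E_G(X)` there are pairwise disjoint compact subsets
`K_1, …, K_L` of `X` with `μ(K_j) > 1 - ε` for every `μ ∈ W_j`. -/
theorem exists_disjoint_compacts_for_disjoint_closed_ergodic_sets
    {G X : Type*} [Group G] [Countable G] [Infinite G]
    [MetricSpace X] [CompactSpace X] [Infinite X]
    [MeasurableSpace X] [BorelSpace X]
    [MulAction G X] [ContinuousConstSMul G X]
    (hG : AmenableGroup G)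
    (hfree : FreeAction G X) (hmin : MinimalAction G X)
    (hcpt : IsCompact (EG G X))
    (ε : ℝ) (hε : 0 < ε) (L : ℕ)
    (W : Fin L → Set (ProbabilityMeasure X))
    (hWclosed : ∀ j, IsClosed (W j))
    (hWsub : ∀ j, W j ⊆ EG G X)
    (hWdisj : ∀ j j', j ≠ j' → Disjoint (W j) (W j')) :
    ∃ K : Fin L → Set X,
      (∀ j, IsCompact (K j)) ∧
      (∀ j j', j ≠ j' → Disjoint (K j) (K j')) ∧
      ∀ j, ∀ μ ∈ W j, 1 - ε < (μ (K j) : ℝ) :=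
  exists_disjoint_compacts_for_disjoint_closed_ergodic_sets_general hcpt hε hWclosed hWsub hWdisj
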